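/- Let T : ℂ[x_1,…,x_d] → ℂ be a pseudo-positive definite functional and let σ_{k,l}, k ∈ ℕ₀, l = 1,…,a_k, be non-negative measures with supports in [0,∞) representing T, i.e. T(f) = Σ_{k=0}^{deg f} Σ_{l=1}^{a_k} ∫_0^∞ f_{k,l}(r) r^{-k} dσ_{k,l}(r) for all polynomials f. If for every N ∈ ℕ₀ one has Σ_{k=0}^∞ Σ_{l=1}^{a_k} ∫_0^∞ r^N r^{-k} dσ_{k,l}(r) < ∞, then there exists a pseudo-positive, signed moment measure σ on ℝ^d such that T(f) = ∫_{ℝ^d} f dσ for all polynomials f. -/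

import Mathlib

open MeasureTheory MvPolynomial Metric
open scoped ComplexOrder ENNReal

noncomputable section

/-- `d`-dimensional Euclidean space. -/
abbrev E (d : ℕ) := EuclideanSpace ℝ (Fin d)

/-- The (surface) measure `dθ` on the unit sphere `S^{d-1}`. -/
noncomputable def sphMeas (d : ℕ) : Measure (sphere (0 : E d) 1) :=
  (volume : Measure (E d)).toSphere

/-- A bundled orthonormal basis `Y_{k,l}`, `l = 1,…,a_k`, of the spaces `H_k(ℝ^d)` of
real-valued harmonic polynomials homogeneous of degree `k`, orthonormal with respect to
`⟨f,g⟩ = ∫_{S^{d-1}} f g dθ`. -/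
structure HarmonicBasis (d : ℕ) where
  a : ℕ → ℕ
  Y : (k : ℕ) → Fin (a k) → MvPolynomial (Fin d) ℝ
  harmonic : ∀ k l, (∑ i, pderiv i (pderiv i (Y k l))) = 0
  homogeneous : ∀ k l, (Y k l).IsHomogeneous k
  orthonormal : ∀ (k k' : ℕ) (l : Fin (a k)) (l' : Fin (a k')),
    (∫ θ : sphere (0 : E d) 1,
        (eval (fun i => (θ : E d) i) (Y k l)) * (eval (fun i => (θ : E d) i) (Y k' l'))
      ∂(sphMeas d)) = if k = k' ∧ (l : ℕ) = (l' : ℕ) then 1 else 0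
  complete : ∀ (k : ℕ) (P : MvPolynomial (Fin d) ℝ),
    (∑ i, pderiv i (pderiv i P)) = 0 → P.IsHomogeneous k →
      P ∈ Submodule.span ℝ (Set.range (Y k))

/-- Evaluation of a complex polynomial in `d` variables at a point of `ℝ^d`. -/
def evalC {d : ℕ} (P : MvPolynomial (Fin d) ℂ) (x : E d) : ℂ :=
  eval (fun i => (x i : ℂ)) P

/-- The polynomial `|x|² = x₁² + … + x_d²`. -/
def normSqP (d : ℕ) : MvPolynomial (Fin d) ℂ := ∑ i, X i ^ 2

/-- Integral of a (complex- or real-valued) function with respect to a signed measure,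
via the Jordan decomposition. -/
noncomputable def sInt {α : Type*} {G : Type*} [MeasurableSpace α] [NormedAddCommGroup G]
    [NormedSpace ℝ G] (μ : SignedMeasure α) (f : α → G) : G :=
  (∫ x, f x ∂μ.toJordanDecomposition.posPart) - ∫ x, f x ∂μ.toJordanDecomposition.negPart

/-- A signed measure is a moment measure if every polynomial is integrable with respect to
its total variation. -/
def IsMomentMeasure {d : ℕ} (μ : SignedMeasure (E d)) : Prop :=
  ∀ P : MvPolynomial (Fin d) ℂ, Integrable (evalC P) μ.totalVariation

namespace HarmonicBasis

variable {d : ℕ} (B : HarmonicBasis d)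

/-- `Y_{k,l}` as a function on `ℝ^d`. -/
def Yf (k : ℕ) (l : Fin (B.a k)) (x : E d) : ℝ := eval (fun i => x i) (B.Y k l)

/-- `Y_{k,l}` as a complex polynomial. -/
def YC (k : ℕ) (l : Fin (B.a k)) : MvPolynomial (Fin d) ℂ :=
  (B.Y k l).map (algebraMap ℝ ℂ)

/-- The Laplace–Fourier coefficient `f_{k,l}(r) = ∫_{S^{d-1}} f(rθ) Y_{k,l}(θ) dθ`. -/
noncomputable def lfCoeff (f : E d → ℂ) (k : ℕ) (l : Fin (B.a k)) (r : ℝ) : ℂ :=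
  ∫ θ : sphere (0 : E d) 1, f (r • (θ : E d)) * (B.Yf k l (θ : E d) : ℂ) ∂(sphMeas d)

/-- `GaussDecomp B f K p` : `p` is a Gauss (Laplace–Fourier) decomposition of the polynomial
`f`, i.e. `f(x) = ∑_{k=0}^{K} ∑_{l=1}^{a_k} p_{k,l}(|x|²) Y_{k,l}(x)` with `p_{k,l} = 0` for
`k > K`. -/
def GaussDecomp (f : MvPolynomial (Fin d) ℂ) (K : ℕ)
    (p : (k : ℕ) → Fin (B.a k) → Polynomial ℂ) : Prop :=
  (∀ k, K < k → ∀ l, p k l = 0) ∧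
    f = ∑ k ∈ Finset.range (K + 1), ∑ l,
      Polynomial.aeval (normSqP d) (p k l) * B.YC k l

/-- The component functional `T_{k,l}(p) = T(p(|x|²) Y_{k,l}(x))`. -/
def component (T : MvPolynomial (Fin d) ℂ → ℂ) (k : ℕ) (l : Fin (B.a k))
    (p : Polynomial ℂ) : ℂ :=
  T (Polynomial.aeval (normSqP d) p * B.YC k l)

/-- A functional `T` on `ℂ[x₁,…,x_d]` is pseudo-positive definite (w.r.t. the basis `Y_{k,l}`)
if `T_{k,l}(p* p) ≥ 0` and `T_{k,l}(t · p*(t) p(t)) ≥ 0` for all univariate `p` and all `k, l`. -/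
def PPD (T : MvPolynomial (Fin d) ℂ → ℂ) : Prop :=
  ∀ (k : ℕ) (l : Fin (B.a k)) (p : Polynomial ℂ),
    0 ≤ B.component T k l (p.map (starRingEnd ℂ) * p) ∧
    0 ≤ B.component T k l (Polynomial.X * (p.map (starRingEnd ℂ) * p))

/-- A signed measure `μ` on `ℝ^d` is pseudo-positive (w.r.t. the basis `Y_{k,l}`) if
`∫ h(|x|) Y_{k,l}(x) dμ ≥ 0` for every non-negative continuous compactly supported `h`. -/
def PseudoPositive (μ : SignedMeasure (E d)) : Prop :=
  ∀ (k : ℕ) (l : Fin (B.a k)) (h : ℝ → ℝ), Continuous h → HasCompactSupport h →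
    (∀ t, 0 ≤ h t) → 0 ≤ sInt μ (fun x => h ‖x‖ * B.Yf k l x)

/-- `ν` is the family of component measures `μ_{k,l}` of the signed measure `μ`, i.e.
`∫_0^∞ h dμ_{k,l} = ∫_{ℝ^d} h(|x|) Y_{k,l}(x) dμ` for all continuous compactly supported `h`. -/
def IsComponentFamily (μ : SignedMeasure (E d))
    (ν : (k : ℕ) → Fin (B.a k) → Measure ℝ) : Prop :=
  ∀ k l, (ν k l) (Set.Iio 0) = 0 ∧
    ∀ h : ℝ → ℝ, Continuous h → HasCompactSupport h →
      ∫ t, h t ∂(ν k l) = sInt μ (fun x => h ‖x‖ * B.Yf k l x)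

/-- The summability condition `C_N = ∑_{k,l} ∫_0^∞ r^N r^{-k} dσ_{k,l}(r) < ∞` for all `N`. -/
def SummCond (σ : (k : ℕ) → Fin (B.a k) → Measure ℝ) : Prop :=
  ∀ N : ℕ, (∑' k : ℕ, ∑ l, ∫⁻ r, (ENNReal.ofReal r) ^ N * ((ENNReal.ofReal r) ^ k)⁻¹
    ∂(σ k l)) < ⊤

end HarmonicBasis

/-- The set `W_τ^{Sti}` of all non-negative moment measures on `[0,∞)` having the same
moments as `τ`. -/
def WSti (τ : Measure ℝ) : Set (Measure ℝ) :=
  {ρ | ρ (Set.Iio 0) = 0 ∧ (∀ m : ℕ, Integrable (fun t => t ^ m) ρ) ∧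
    ∀ m : ℕ, ∫ t, t ^ m ∂ρ = ∫ t, t ^ m ∂τ}

/-- A measure `ν` on `[0,∞)` is determined in the sense of Stieltjes if it is the only
non-negative measure on `[0,∞)` with its moments. -/
def StieltjesDeterminate (ν : Measure ℝ) : Prop :=
  ∀ τ : Measure ℝ, τ ∈ WSti ν → τ = ν

/-- Laplacian on real polynomials. -/
def lapR {d : ℕ} : MvPolynomial (Fin d) ℝ →ₗ[ℝ] MvPolynomial (Fin d) ℝ :=
  ∑ i, (pderiv i).toLinearMap ∘ₗ (pderiv i).toLinearMap

theorem lapR_apply {d : ℕ} (P : MvPolynomial (Fin d) ℝ) :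
    lapR P = ∑ i, pderiv i (pderiv i P) := by
  simp [lapR]

/-- The real polynomial `|x|²`. -/
def nsR (d : ℕ) : MvPolynomial (Fin d) ℝ := ∑ i, X i ^ 2

theorem nsR_hom (d : ℕ) : (nsR d).IsHomogeneous 2 := by
  apply IsHomogeneous.sum
  intro i _
  exact isHomogeneous_X_pow i 2

theorem pderiv_nsR {d : ℕ} (i : Fin d) : pderiv i (nsR d) = 2 * X i := by
  classical
  simp only [nsR, map_sum, Derivation.leibniz_pow, pderiv_X, Pi.single_apply]
  rw [Finset.sum_eq_single i]
  · simp
  · intro b _ hb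
    simp [hb]
  · simp

theorem lapR_nsR_mul {d n : ℕ} {Q : MvPolynomial (Fin d) ℝ} (hQ : Q.IsHomogeneous n) :
    lapR (nsR d * Q) = ((2 * d + 4 * n : ℕ) : ℝ) • Q + nsR d * lapR Q := by
  have e := hQ.sum_X_mul_pderiv
  have h2 : ∀ i, pderiv i (2 : MvPolynomial (Fin d) ℝ) = 0 := fun i => by
    exact (pderiv i).map_natCast 2
  have key : ∀ i, pderiv i (pderiv i (nsR d * Q)) =
      2 * Q + 4 * (X i * pderiv i Q) + nsR d * pderiv i (pderiv i Q) := by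
    intro i
    simp only [Derivation.leibniz, pderiv_nsR, map_add, smul_eq_mul, h2, pderiv_X_self]
    ring
  rw [lapR_apply, lapR_apply, Finset.sum_congr rfl (fun i _ => key i), Finset.sum_add_distrib,
    Finset.sum_add_distrib, ← Finset.mul_sum, ← Finset.mul_sum, e]
  have c2 : (C (2 : ℝ) : MvPolynomial (Fin d) ℝ) = 2 := map_ofNat C 2
  have c4 : (C (4 : ℝ) : MvPolynomial (Fin d) ℝ) = 4 := map_ofNat C 4
  simp only [Finset.sum_const, Finset.card_univ, Fintype.card_fin, nsmul_eq_mul]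
  rw [MvPolynomial.smul_eq_C_mul]
  push_cast
  simp only [map_add, map_mul, c2, c4, map_natCast, ← Finset.mul_sum]
  ring

theorem lapR_hom {d n : ℕ} {P : MvPolynomial (Fin d) ℝ} (hP : P.IsHomogeneous (n + 2)) :
    (lapR P).IsHomogeneous n := by
  rw [lapR_apply]
  apply IsHomogeneous.sum
  intro i _
  exact (hP.pderiv (i := i)).pderiv (i := i)

theorem lapR_low {d n : ℕ} (hn : n < 2) {P : MvPolynomial (Fin d) ℝ} (hP : P.IsHomogeneous n) :
    lapR P = 0 := by
  rw [lapR_apply]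
  apply Finset.sum_eq_zero
  intro i _
  have h : (pderiv i P).IsHomogeneous 0 := by
    have := hP.pderiv (i := i)
    rwa [show n - 1 = 0 by omega] at this
  rw [← totalDegree_zero_iff_isHomogeneous, totalDegree_eq_zero_iff_eq_C] at h
  rw [h, pderiv_C]

theorem lapR_pow {d m : ℕ} (hd : 1 ≤ d) {h : MvPolynomial (Fin d) ℝ} (hh : h.IsHomogeneous m)
    (h0 : lapR h = 0) (j : ℕ) :
    ∃ c : ℝ, 0 < c ∧ lapR (nsR d ^ (j + 1) * h) = c • (nsR d ^ j * h) := by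
  induction j with
  | zero =>
    refine ⟨((2 * d + 4 * m : ℕ) : ℝ), by positivity, ?_⟩
    simp [lapR_nsR_mul hh, h0]
  | succ j ih =>
    obtain ⟨c, hc, e⟩ := ih
    have hom : (nsR d ^ (j + 1) * h).IsHomogeneous (2 * (j + 1) + m) :=
      ((nsR_hom d).pow _).mul hh
    refine ⟨((2 * d + 4 * (2 * (j + 1) + m) : ℕ) : ℝ) + c, by positivity, ?_⟩
    rw [pow_succ' (nsR d) (j + 1), mul_assoc, lapR_nsR_mul hom, e, add_smul, mul_smul_comm,
      ← mul_assoc (nsR d), ← pow_succ']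

/-- Span of the `|x|^{2j} h` with `h` harmonic homogeneous, total degree `n`. -/
def gaussR (d n : ℕ) : Submodule ℝ (MvPolynomial (Fin d) ℝ) :=
  Submodule.span ℝ {P | ∃ j m h, 2 * j + m = n ∧ IsHomogeneous h m ∧ lapR h = 0 ∧
    P = nsR d ^ j * h}

theorem gaussR_hom {d n : ℕ} {P : MvPolynomial (Fin d) ℝ} (hP : P ∈ gaussR d n) :
    P.IsHomogeneous n := by
  rw [← mem_homogeneousSubmodule]
  refine (Submodule.span_le.2 ?_) hP
  rintro _ ⟨j, m, h, rfl, hh, -, rfl⟩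
  exact ((nsR_hom d).pow _).mul hh

theorem gaussR_lap {d n : ℕ} (hd : 1 ≤ d) {P : MvPolynomial (Fin d) ℝ} (hP : P ∈ gaussR d n) :
    ∃ Q ∈ gaussR d (n + 2), lapR Q = P := by
  suffices gaussR d n ≤ (gaussR d (n + 2)).map lapR by
    obtain ⟨Q, h1, h2⟩ := this hP
    exact ⟨Q, h1, h2⟩
  refine Submodule.span_le.2 ?_
  rintro _ ⟨j, m, h, rfl, hh, h0, rfl⟩
  obtain ⟨c, hc, e⟩ := lapR_pow hd hh h0 j
  refine ⟨c⁻¹ • (nsR d ^ (j + 1) * h), ?_, ?_⟩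
  · exact Submodule.smul_mem _ _ (Submodule.subset_span ⟨j + 1, m, h, by ring, hh, h0, rfl⟩)
  · rw [map_smul, e, smul_smul, inv_mul_cancel₀ hc.ne', one_smul]

theorem mem_gaussR {d : ℕ} (hd : 1 ≤ d) (n : ℕ) (P : MvPolynomial (Fin d) ℝ)
    (hP : P.IsHomogeneous n) : P ∈ gaussR d n := by
  induction n using Nat.strong_induction_on generalizing P with
  | _ n ih =>
    have harm : ∀ R : MvPolynomial (Fin d) ℝ, R.IsHomogeneous n → lapR R = 0 → R ∈ gaussR d n :=
      fun R h1 h2 => Submodule.subset_span ⟨0, n, R, by ring, h1, h2, by simp⟩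
    by_cases hn : n < 2
    · exact harm P hP (lapR_low hn hP)
    · obtain ⟨n, rfl⟩ : ∃ m, n = m + 2 := ⟨n - 2, by omega⟩
      obtain ⟨Q, hQ, e⟩ := gaussR_lap hd (ih n (by omega) _ (lapR_hom hP))
      have : P - Q ∈ gaussR d (n + 2) := by
        apply harm _ (hP.sub (gaussR_hom hQ))
        rw [map_sub, e, sub_self]
      simpa using add_mem this hQ

namespace HarmonicBasis

variable {d : ℕ} (B : HarmonicBasis d)

theorem GaussDecomp.mono {B : HarmonicBasis d} {f : MvPolynomial (Fin d) ℂ} {K K' : ℕ}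
    {p : (k : ℕ) → Fin (B.a k) → Polynomial ℂ} (h : B.GaussDecomp f K p) (hK : K ≤ K') :
    B.GaussDecomp f K' p := by
  refine ⟨fun k hk l => h.1 k (by omega) l, ?_⟩
  rw [h.2]
  apply Finset.sum_subset
  · intro x hx
    simp only [Finset.mem_range] at *
    omega
  · intro k _ hk
    apply Finset.sum_eq_zero
    intro l _
    rw [h.1 k (by simpa using hk) l]
    simp

/-- The polynomials admitting a Gauss decomposition. -/
def gaussC : Submodule ℂ (MvPolynomial (Fin d) ℂ) where
  carrier := {f | ∃ K p, B.GaussDecomp f K p}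
  zero_mem' := ⟨0, fun _ _ => 0, by simp [GaussDecomp]⟩
  add_mem' := by
    rintro f g ⟨K, p, h⟩ ⟨K', p', h'⟩
    have h1 := h.mono (le_max_left K K')
    have h2 := h'.mono (le_max_right K K')
    refine ⟨max K K', fun k l => p k l + p' k l, fun k hk l => ?_, ?_⟩
    · beta_reduce
      rw [h1.1 k hk l, h2.1 k hk l, add_zero]
    · conv_lhs => rw [h1.2, h2.2]
      simp only [map_add, add_mul, Finset.sum_add_distrib]
  smul_mem' := by
    rintro c f ⟨K, p, h⟩
    refine ⟨K, fun k l => c • p k l, fun k hk l => ?_, ?_⟩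
    · beta_reduce
      rw [h.1 k hk l, smul_zero]
    · conv_lhs => rw [h.2]
      simp only [map_smul, smul_mul_assoc, Finset.smul_sum]

theorem gaussC_YC (k : ℕ) (l : Fin (B.a k)) (j : ℕ) : normSqP d ^ j * B.YC k l ∈ B.gaussC := by
  classical
  refine ⟨k, fun k' l' => if k' = k ∧ (l' : ℕ) = l then Polynomial.X ^ j else 0, ?_, ?_⟩
  · intro k' hk l'
    beta_reduce; rw [if_neg]
    rintro ⟨h, -⟩
    omega
  · rw [Finset.sum_eq_single k]
    · rw [Finset.sum_eq_single l]
      · simp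
      · intro b _ hb
        beta_reduce; rw [if_neg]
        · simp
        · rintro ⟨-, h⟩
          exact hb (Fin.ext h)
      · simp
    · intro b _ hb
      simp [hb]
    · simp

theorem map_nsR : (nsR d).map (algebraMap ℝ ℂ) = normSqP d := by
  simp [nsR, normSqP]

theorem exists_gauss (hd : 1 ≤ d) (f : MvPolynomial (Fin d) ℂ) :
    ∃ K p, B.GaussDecomp f K p := by
  suffices f ∈ B.gaussC from this
  have hreal : ∀ n (P : MvPolynomial (Fin d) ℝ), P ∈ gaussR d n →
      P.map (algebraMap ℝ ℂ) ∈ B.gaussC := by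
    intro n P hP
    induction hP using Submodule.span_induction with
    | mem x hx =>
      obtain ⟨j, m, h, -, hh, h0, rfl⟩ := hx
      rw [lapR_apply] at h0
      have := B.complete m h h0 hh
      rw [map_mul, map_pow, map_nsR]
      clear hh h0
      induction this using Submodule.span_induction with
      | mem x hx =>
        obtain ⟨l, rfl⟩ := hx
        exact B.gaussC_YC m l j
      | zero => simp
      | add x y _ _ hx hy =>
        rw [map_add, mul_add]
        exact add_mem hx hy
      | smul a x _ hx =>
        rw [smul_eq_C_mul, map_mul, map_C, mul_left_comm, ← smul_eq_C_mul]
        exact Submodule.smul_mem _ _ hx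
    | zero => simp
    | add x y _ _ hx hy =>
      rw [map_add]
      exact add_mem hx hy
    | smul a x _ hx =>
      rw [smul_eq_C_mul, map_mul, map_C, ← smul_eq_C_mul]
      exact Submodule.smul_mem _ _ hx
  rw [f.as_sum]
  refine Submodule.sum_mem _ fun s _ => ?_
  have h1 := hreal _ _ (mem_gaussR hd s.degree (monomial s (1 : ℝ))
    (isHomogeneous_monomial 1 rfl))
  have h2 := Submodule.smul_mem _ (coeff s f) h1
  simpa [map_monomial, smul_monomial] using h2

end HarmonicBasis
theorem sub_add_comm_measure {α : Type*} [MeasurableSpace α] (M N : Measure α)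
    [IsFiniteMeasure M] [IsFiniteMeasure N] : (M - N) + N = (N - M) + M := by
  rw [← Measure.toSignedMeasure_eq_toSignedMeasure_iff, Measure.toSignedMeasure_add,
    Measure.toSignedMeasure_add]
  have := Measure.sub_toSignedMeasure_eq_toSignedMeasure_sub (μ := M) (ν := N)
  rw [sub_eq_sub_iff_add_eq_add] at this
  rw [← this, add_comm]

theorem sInt_sub {α G : Type*} [MeasurableSpace α] [NormedAddCommGroup G]
    [NormedSpace ℝ G] (M N : Measure α) [IsFiniteMeasure M] [IsFiniteMeasure N] {F : α → G}
    (hM : Integrable F M) (hN : Integrable F N) :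
    sInt (M.toSignedMeasure - N.toSignedMeasure) F = ∫ x, F x ∂M - ∫ x, F x ∂N := by
  rw [sInt, Measure.toJordanDecomposition_toSignedMeasure_sub]
  rw [Measure.jordanDecompositionOfToSignedMeasureSub_posPart,
    Measure.jordanDecompositionOfToSignedMeasureSub_negPart]
  rw [sub_eq_sub_iff_add_eq_add]
  have h1 := hM.mono_measure (Measure.sub_le (μ := M) (ν := N))
  have h2 := hN.mono_measure (Measure.sub_le (μ := N) (ν := M))
  rw [← integral_add_measure h1 hN, ← integral_add_measure hM h2, sub_add_comm_measure, add_comm M]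

theorem integrable_totalVariation_sub {α G : Type*} [MeasurableSpace α] [NormedAddCommGroup G]
    [NormedSpace ℝ G] (M N : Measure α) [IsFiniteMeasure M] [IsFiniteMeasure N] {F : α → G}
    (hM : Integrable F M) (hN : Integrable F N) :
    Integrable F (M.toSignedMeasure - N.toSignedMeasure).totalVariation := by
  rw [SignedMeasure.totalVariation, Measure.toJordanDecomposition_toSignedMeasure_sub]
  exact (hM.mono_measure (Measure.sub_le)).add_measure (hN.mono_measure (Measure.sub_le))

instance (d : ℕ) : IsFiniteMeasure (sphMeas d) := by
  unfold sphMeas; infer_instance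

/-- polynomially bounded functions -/
def PB {d : ℕ} {G : Type*} [NormedAddCommGroup G] (F : E d → G) : Prop :=
  ∃ (C : ℝ) (n : ℕ), 0 ≤ C ∧ ∀ x, ‖F x‖ ≤ C * (1 + ‖x‖) ^ n

theorem PB.add {d : ℕ} {G : Type*} [NormedAddCommGroup G] {F F' : E d → G} (h : PB F)
    (h' : PB F') : PB (fun x => F x + F' x) := by
  obtain ⟨C, n, hC, h⟩ := h
  obtain ⟨C', n', hC', h'⟩ := h'
  refine ⟨C + C', n + n', by positivity, fun x => ?_⟩
  have h1 : (1 : ℝ) ≤ 1 + ‖x‖ := by linarith [norm_nonneg x]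
  have e1 : (1 + ‖x‖) ^ n ≤ (1 + ‖x‖) ^ (n + n') := pow_le_pow_right₀ h1 (by omega)
  have e2 : (1 + ‖x‖) ^ n' ≤ (1 + ‖x‖) ^ (n + n') := pow_le_pow_right₀ h1 (by omega)
  calc _ ≤ ‖F x‖ + ‖F' x‖ := norm_add_le _ _
    _ ≤ C * (1 + ‖x‖) ^ n + C' * (1 + ‖x‖) ^ n' := add_le_add (h x) (h' x)
    _ ≤ C * (1 + ‖x‖) ^ (n + n') + C' * (1 + ‖x‖) ^ (n + n') := by gcongr
    _ = _ := by ring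

theorem PB.smul {d : ℕ} {G 𝕜 : Type*} [NormedAddCommGroup G] [NormedField 𝕜] [NormedSpace 𝕜 G]
    {F : E d → 𝕜} {F' : E d → G} (h : PB F)
    (h' : PB F') : PB (fun x => F x • F' x) := by
  obtain ⟨C, n, hC, h⟩ := h
  obtain ⟨C', n', hC', h'⟩ := h'
  refine ⟨C * C', n + n', by positivity, fun x => ?_⟩
  rw [norm_smul, pow_add]
  calc _ ≤ (C * (1 + ‖x‖) ^ n) * (C' * (1 + ‖x‖) ^ n') :=
        mul_le_mul (h x) (h' x) (norm_nonneg _) (by positivity)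
    _ = _ := by ring

theorem PB_const {d : ℕ} {G : Type*} [NormedAddCommGroup G] (c : G) : PB (fun _ : E d => c) :=
  ⟨‖c‖, 0, norm_nonneg _, fun x => by simp⟩

theorem PB_evalC {d : ℕ} (P : MvPolynomial (Fin d) ℂ) : PB (evalC P) := by
  induction P using MvPolynomial.induction_on with
  | C a =>
    have : evalC (d := d) (C a) = fun _ => a := by ext x; simp [evalC]
    rw [this]; exact PB_const a
  | add p q hp hq =>
    have : evalC (p + q) = fun x => evalC p x + evalC q x := by ext x; simp [evalC]
    rw [this]; exact hp.add hq
  | mul_X p i hp =>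
    have : evalC (p * X i) = fun x => evalC p x • ((x i : ℝ) : ℂ) := by ext x; simp [evalC]
    rw [this]
    refine hp.smul ⟨1, 1, zero_le_one, fun x => ?_⟩
    have := PiLp.norm_apply_le x i
    rw [Complex.norm_real]
    linarith

theorem continuous_evalC {d : ℕ} (P : MvPolynomial (Fin d) ℂ) : Continuous (evalC P) := by
  induction P using MvPolynomial.induction_on with
  | C a =>
    have : evalC (d := d) (C a) = fun _ => a := by ext x; simp [evalC]
    rw [this]; exact continuous_const
  | add p q hp hq =>
    have : evalC (p + q) = fun x => evalC p x + evalC q x := by ext x; simp [evalC]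
    rw [this]; exact hp.add hq
  | mul_X p i hp =>
    have : evalC (p * X i) = fun x => evalC p x * ((x i : ℝ) : ℂ) := by ext x; simp [evalC]
    rw [this]
    fun_prop

namespace HarmonicBasis

variable {d : ℕ} (B : HarmonicBasis d)

theorem evalC_YC (k : ℕ) (l : Fin (B.a k)) (x : E d) : evalC (B.YC k l) x = (B.Yf k l x : ℂ) := by
  simp only [evalC, YC, Yf]
  rw [MvPolynomial.eval_map]
  exact (MvPolynomial.eval₂_comp_left (algebraMap ℝ ℂ) (RingHom.id ℝ) _ _).symm

theorem PB_Yf (k : ℕ) (l : Fin (B.a k)) : PB (B.Yf k l) := by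
  obtain ⟨C, n, hC, h⟩ := PB_evalC (B.YC k l)
  refine ⟨C, n, hC, fun x => ?_⟩
  have := h x
  rwa [evalC_YC, Complex.norm_real] at this

theorem continuous_Yf (k : ℕ) (l : Fin (B.a k)) : Continuous (B.Yf k l) := by
  have := Complex.continuous_re.comp (continuous_evalC (B.YC k l))
  have e : (Complex.re ∘ evalC (B.YC k l)) = B.Yf k l := by
    ext x
    simp [evalC_YC]
  rwa [e] at this

theorem Yf_smul (k : ℕ) (l : Fin (B.a k)) (r : ℝ) (x : E d) :
    B.Yf k l (r • x) = r ^ k * B.Yf k l x := by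
  simp only [Yf]
  rw [MvPolynomial.eval_eq, MvPolynomial.eval_eq, Finset.mul_sum]
  refine Finset.sum_congr rfl fun s hs => ?_
  have hdeg := (B.homogeneous k l).degree_eq_sum_deg_support hs
  simp only [PiLp.smul_apply, smul_eq_mul, mul_pow, Finset.prod_mul_distrib, Finset.prod_pow_eq_pow_sum]
  have : ∑ i ∈ s.support, s i = k := by rw [← hdeg]
  rw [this]
  ring

end HarmonicBasis
namespace HarmonicBasis

variable {d : ℕ} (B : HarmonicBasis d) (σ : (k : ℕ) → Fin (B.a k) → Measure ℝ)

/-- `r^{-k} dσ_{k,l}`. -/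
def tau (i : Σ k, Fin (B.a k)) : Measure ℝ :=
  (σ i.1 i.2).withDensity (fun r => ((ENNReal.ofReal r) ^ i.1)⁻¹)

/-- polar coordinates -/
def pol (d : ℕ) (z : ℝ × sphere (0 : E d) 1) : E d := z.1 • (z.2 : E d)

theorem continuous_pol : Continuous (pol d) := by
  unfold pol; fun_prop

theorem norm_pol (z : ℝ × sphere (0 : E d) 1) : ‖pol d z‖ = |z.1| := by
  rw [pol, norm_smul, norm_eq_of_mem_sphere, mul_one, Real.norm_eq_abs]

/-- The positive (`s = 1`) or negative (`s = -1`) part of a single component. -/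
def rho (s : ℝ) (i : Σ k, Fin (B.a k)) : Measure (E d) :=
  (((B.tau σ i).prod (sphMeas d)).withDensity
    (fun z => ENNReal.ofReal (s * B.Yf i.1 i.2 (z.2 : E d)))).map (pol d)

/-- The total positive/negative part. -/
def MM (s : ℝ) : Measure (E d) := Measure.sum (B.rho σ s)

theorem measurable_dens (k : ℕ) : Measurable (fun r : ℝ => ((ENNReal.ofReal r) ^ k)⁻¹) := by
  fun_prop

variable {σ}

theorem tau_summ (hsum : B.SummCond σ) (N : ℕ) :
    ∑' i, ∫⁻ r, (ENNReal.ofReal r) ^ N ∂(B.tau σ i) < ⊤ := by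
  refine lt_of_eq_of_lt ?_ (hsum N)
  rw [ENNReal.tsum_sigma']
  congr 1
  ext k
  rw [tsum_fintype]
  refine Finset.sum_congr rfl fun l _ => ?_
  rw [tau, lintegral_withDensity_eq_lintegral_mul _ (measurable_dens k) (by fun_prop)]
  refine lintegral_congr fun r => ?_
  simp only [Pi.mul_apply]
  rw [mul_comm]

theorem tau_finite (hsum : B.SummCond σ) (i : Σ k, Fin (B.a k)) : IsFiniteMeasure (B.tau σ i) := by
  refine ⟨?_⟩
  have := (ENNReal.le_tsum i).trans_lt (B.tau_summ hsum 0)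
  simpa using this

theorem tau_nonneg (hpos : ∀ k l, (σ k l) (Set.Iio 0) = 0) (i : Σ k, Fin (B.a k)) :
    ∀ᵐ r ∂(B.tau σ i), 0 ≤ r := by
  have h : ∀ᵐ r ∂(σ i.1 i.2), 0 ≤ r := by
    rw [ae_iff]
    simpa [Set.Iio] using hpos i.1 i.2
  exact (withDensity_absolutelyContinuous _ _).ae_le h

theorem continuous_Yf_sph (k : ℕ) (l : Fin (B.a k)) :
    Continuous (fun θ : sphere (0 : E d) 1 => B.Yf k l (θ : E d)) :=
  (B.continuous_Yf k l).comp continuous_subtype_val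

theorem measurable_Ydens (s : ℝ) (k : ℕ) (l : Fin (B.a k)) :
    Measurable (fun θ : sphere (0 : E d) 1 => ENNReal.ofReal (s * B.Yf k l (θ : E d))) :=
  ENNReal.measurable_ofReal.comp ((B.continuous_Yf_sph k l).measurable.const_mul s)

theorem integrable_sph {G : Type*} [NormedAddCommGroup G]
    {f : sphere (0 : E d) 1 → G} (hf : Continuous f) :
    Integrable f (sphMeas d) := by
  exact hf.integrable_of_hasCompactSupport (HasCompactSupport.of_compactSpace f)

theorem int_sph_le {s : ℝ} (hs : |s| ≤ 1) (k : ℕ) (l : Fin (B.a k)) :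
    ∫⁻ θ : sphere (0 : E d) 1, ENNReal.ofReal (s * B.Yf k l (θ : E d)) ∂(sphMeas d) ≤
      (sphMeas d) Set.univ + 1 := by
  have h1 : ∀ θ : sphere (0 : E d) 1, ENNReal.ofReal (s * B.Yf k l (θ : E d)) ≤
      1 + ENNReal.ofReal (B.Yf k l (θ : E d) * B.Yf k l (θ : E d)) := by
    intro θ
    rw [← ENNReal.ofReal_one, ← ENNReal.ofReal_add zero_le_one (mul_self_nonneg _)]
    apply ENNReal.ofReal_le_ofReal
    set y := B.Yf k l (θ : E d)
    have : s * y ≤ |y| := by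
      calc s * y ≤ |s * y| := le_abs_self _
        _ = |s| * |y| := abs_mul _ _
        _ ≤ 1 * |y| := by gcongr
        _ = |y| := one_mul _
    nlinarith [abs_mul_abs_self y, sq_nonneg (|y| - 1), abs_nonneg y]
  refine (lintegral_mono h1).trans ?_
  rw [lintegral_add_left measurable_const, lintegral_const, one_mul]
  gcongr
  rw [← ofReal_integral_eq_lintegral_ofReal]
  · have := B.orthonormal k k l l
    simp only [Yf]
    rw [this]
    simp
  · exact integrable_sph ((B.continuous_Yf_sph k l).mul (B.continuous_Yf_sph k l))
  · exact Filter.Eventually.of_forall fun θ => mul_self_nonneg _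

theorem lint_MM (hpos : ∀ k l, (σ k l) (Set.Iio 0) = 0) (hsum : B.SummCond σ)
    {s : ℝ} (hs : |s| ≤ 1) (n : ℕ) : ∫⁻ x, ENNReal.ofReal (‖x‖ ^ n) ∂(B.MM σ s) < ⊤ := by
  rw [MM, lintegral_sum_measure]
  have key : ∀ i, ∫⁻ x, ENNReal.ofReal (‖x‖ ^ n) ∂(B.rho σ s i) ≤
      (∫⁻ r, (ENNReal.ofReal r) ^ n ∂(B.tau σ i)) * ((sphMeas d) Set.univ + 1) := by
    intro i
    have := B.tau_finite hsum i
    have hY := B.measurable_Ydens s i.1 i.2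
    have hY2 : Measurable (fun z : ℝ × sphere (0 : E d) 1 =>
      ENNReal.ofReal (s * B.Yf i.1 i.2 (z.2 : E d))) := hY.comp measurable_snd
    have hP : Measurable (fun z : ℝ × sphere (0 : E d) 1 => ENNReal.ofReal (‖pol d z‖ ^ n)) := by
      simp only [norm_pol]; fun_prop
    rw [rho, lintegral_map (by fun_prop) continuous_pol.measurable,
      lintegral_withDensity_eq_lintegral_mul _ hY2 hP]
    simp only [Pi.mul_apply, norm_pol]
    simp only [mul_comm (ENNReal.ofReal (s * _))]
    rw [lintegral_prod_mul (f := fun r : ℝ => ENNReal.ofReal (|r| ^ n)) (by fun_prop) hY.aemeasurable]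
    refine mul_le_mul' (le_of_eq ?_) (B.int_sph_le hs i.1 i.2)
    refine lintegral_congr_ae ?_
    filter_upwards [B.tau_nonneg hpos i] with r hr
    rw [abs_of_nonneg hr, ENNReal.ofReal_pow hr]
  refine (ENNReal.tsum_le_tsum key).trans_lt ?_
  rw [ENNReal.tsum_mul_right]
  exact ENNReal.mul_lt_top (B.tau_summ hsum n) (by simp [measure_lt_top])

theorem MM_finite (hpos : ∀ k l, (σ k l) (Set.Iio 0) = 0) (hsum : B.SummCond σ)
    {s : ℝ} (hs : |s| ≤ 1) : IsFiniteMeasure (B.MM σ s) := by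
  refine ⟨?_⟩
  simpa using B.lint_MM hpos hsum hs 0

theorem integrable_MM (hpos : ∀ k l, (σ k l) (Set.Iio 0) = 0) (hsum : B.SummCond σ)
    {s : ℝ} (hs : |s| ≤ 1) {G : Type*} [NormedAddCommGroup G] {F : E d → G}
    (hF : StronglyMeasurable F) (hb : PB F) : Integrable F (B.MM σ s) := by
  obtain ⟨C, n, hC, h⟩ := hb
  have hp : ∀ m, Integrable (fun x : E d => ‖x‖ ^ m) (B.MM σ s) := by
    intro m
    refine ⟨by fun_prop, ?_⟩
    rw [hasFiniteIntegral_iff_ofReal (Filter.Eventually.of_forall fun x => by positivity)]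
    exact B.lint_MM hpos hsum hs m
  have : Integrable (fun x : E d => C * (2 ^ (n - 1) * (‖x‖ ^ 0 + ‖x‖ ^ n))) (B.MM σ s) :=
    (((hp 0).add (hp n)).const_mul _).const_mul _
  refine this.mono' hF.aestronglyMeasurable (Filter.Eventually.of_forall fun x => ?_)
  refine (h x).trans ?_
  gcongr
  have := add_pow_le zero_le_one (norm_nonneg x) n
  simpa using this

variable {G : Type*} [NormedAddCommGroup G] [NormedSpace ℝ G]

theorem rho_diff (hsum : B.SummCond σ) (i : Σ k, Fin (B.a k)) {F : E d → G}
    (hF : StronglyMeasurable F)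
    (h1 : Integrable F (B.rho σ 1 i)) (h2 : Integrable F (B.rho σ (-1) i)) :
    ∫ x, F x ∂(B.rho σ 1 i) - ∫ x, F x ∂(B.rho σ (-1) i) =
      ∫ r, ∫ θ : sphere (0 : E d) 1, B.Yf i.1 i.2 (θ : E d) • F (r • (θ : E d)) ∂(sphMeas d)
        ∂(B.tau σ i) := by
  have := B.tau_finite hsum i
  have hm : ∀ s, Measurable (fun z : ℝ × sphere (0 : E d) 1 =>
      ENNReal.ofReal (s * B.Yf i.1 i.2 (z.2 : E d))) := fun s =>
    (B.measurable_Ydens s i.1 i.2).comp measurable_snd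
  have ht : ∀ s, ∀ᵐ z ∂((B.tau σ i).prod (sphMeas d)),
      ENNReal.ofReal (s * B.Yf i.1 i.2 (z.2 : E d)) < ⊤ := fun s =>
    Filter.Eventually.of_forall fun z => ENNReal.ofReal_lt_top
  have hint : ∀ s, Integrable F (B.rho σ s i) → Integrable (fun z : ℝ × sphere (0 : E d) 1 =>
      (ENNReal.ofReal (s * B.Yf i.1 i.2 (z.2 : E d))).toReal • F (pol d z))
      ((B.tau σ i).prod (sphMeas d)) := by
    intro s h
    rw [rho, integrable_map_measure hF.aestronglyMeasurable continuous_pol.aemeasurable] at h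
    exact (integrable_withDensity_iff_integrable_smul' (hm s) (ht s)).1 h
  have hev : ∀ s, ∫ x, F x ∂(B.rho σ s i) = ∫ z : ℝ × sphere (0 : E d) 1,
      (ENNReal.ofReal (s * B.Yf i.1 i.2 (z.2 : E d))).toReal • F (pol d z)
      ∂((B.tau σ i).prod (sphMeas d)) := by
    intro s
    rw [rho, integral_map continuous_pol.aemeasurable hF.aestronglyMeasurable,
      integral_withDensity_eq_integral_toReal_smul (hm s) (ht s)]
  have hpt : ∀ z : ℝ × sphere (0 : E d) 1,
      (ENNReal.ofReal (1 * B.Yf i.1 i.2 (z.2 : E d))).toReal • F (pol d z) -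
      (ENNReal.ofReal ((-1) * B.Yf i.1 i.2 (z.2 : E d))).toReal • F (pol d z) =
      B.Yf i.1 i.2 (z.2 : E d) • F (pol d z) := by
    intro z
    rw [← sub_smul]
    congr 1
    rw [ENNReal.toReal_ofReal', ENNReal.toReal_ofReal', one_mul, neg_one_mul, ← max_zero_sub_eq_self (B.Yf i.1 i.2 (z.2 : E d))]
    simp
  rw [hev, hev, ← integral_sub (hint 1 h1) (hint (-1) h2)]
  have h3 := (hint 1 h1).sub (hint (-1) h2)
  simp only [hpt] at h3 ⊢
  rw [integral_prod]
  · rfl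
  · refine h3.congr (Filter.Eventually.of_forall fun z => ?_)
    exact hpt z

theorem MM_diff (hsum : B.SummCond σ) {F : E d → G}
    (hF : StronglyMeasurable F)
    (h1 : Integrable F (B.MM σ 1)) (h2 : Integrable F (B.MM σ (-1))) :
    ∫ x, F x ∂(B.MM σ 1) - ∫ x, F x ∂(B.MM σ (-1)) =
      ∑' i, ∫ r, ∫ θ : sphere (0 : E d) 1,
        B.Yf i.1 i.2 (θ : E d) • F (r • (θ : E d)) ∂(sphMeas d) ∂(B.tau σ i) := by
  have hs1 := hasSum_integral_measure h1
  have hs2 := hasSum_integral_measure h2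
  have := (hs1.sub hs2).tsum_eq
  rw [MM, MM, ← this]
  congr 1
  ext i
  exact (B.rho_diff hsum i hF (h1.mono_measure (Measure.le_sum _ i))
    (h2.mono_measure (Measure.le_sum _ i)))

theorem MM_comp [CompleteSpace G] (hpos : ∀ k l, (σ k l) (Set.Iio 0) = 0) (hsum : B.SummCond σ)
    {F : E d → G}
    (hF : StronglyMeasurable F)
    (h1 : Integrable F (B.MM σ 1)) (h2 : Integrable F (B.MM σ (-1)))
    (k : ℕ) (l : Fin (B.a k)) (g : ℝ → G) (hg : ∀ x, F x = B.Yf k l x • g ‖x‖) :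
    ∫ x, F x ∂(B.MM σ 1) - ∫ x, F x ∂(B.MM σ (-1)) = ∫ r, g r ∂(σ k l) := by
  have hin : ∀ (k' : ℕ) (l' : Fin (B.a k')) (r : ℝ), ∫ θ : sphere (0 : E d) 1,
        B.Yf k' l' (θ : E d) • F (r • (θ : E d)) ∂(sphMeas d) =
        (if k' = k ∧ (l' : ℕ) = l then (1 : ℝ) else 0) • (r ^ k • g |r|) := by
    intro k' l' r
    rw [← B.orthonormal, ← integral_smul_const]
    refine integral_congr_ae (Filter.Eventually.of_forall fun θ => ?_)
    simp only
    rw [hg, Yf_smul, norm_smul, norm_eq_of_mem_sphere, mul_one, Real.norm_eq_abs, smul_smul,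
      smul_smul]
    congr 1
    simp only [Yf]
    ring
  rw [B.MM_diff hsum hF h1 h2, tsum_eq_single ⟨k, l⟩]
  · simp only [hin]
    simp only [and_self, if_true, one_smul]
    have hfin : ∀ᵐ r ∂(σ k l), ((ENNReal.ofReal r) ^ k)⁻¹ < ⊤ := by
      refine ae_lt_top (measurable_dens k) ?_
      have := (B.tau_finite hsum ⟨k, l⟩).measure_univ_lt_top
      rw [tau, withDensity_apply _ MeasurableSet.univ, setLIntegral_univ] at this
      exact this.ne
    rw [tau, integral_withDensity_eq_integral_toReal_smul (measurable_dens k) hfin]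
    refine integral_congr_ae ?_
    have hp : ∀ᵐ r ∂(σ k l), 0 ≤ r := by
      rw [ae_iff]
      simpa [Set.Iio] using hpos k l
    filter_upwards [hp, hfin] with r hr hf
    rw [smul_smul, abs_of_nonneg hr]
    have : r ^ k ≠ 0 := by
      intro h0
      rw [← ENNReal.ofReal_pow hr, h0] at hf
      simp at hf
    rw [ENNReal.toReal_inv, ENNReal.toReal_pow, ENNReal.toReal_ofReal hr, inv_mul_cancel₀ this,
      one_smul]
  · rintro ⟨k', l'⟩ hne
    simp only [hin]
    rw [if_neg]
    · simp
    · rintro ⟨rfl, h⟩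
      exact hne (by rw [Fin.ext h])

end HarmonicBasis
theorem evalC_comp {d : ℕ} (B : HarmonicBasis d) (k : ℕ) (l : Fin (B.a k)) (p : Polynomial ℂ)
    (x : E d) : evalC (Polynomial.aeval (normSqP d) p * B.YC k l) x =
      B.Yf k l x • p.eval ((‖x‖ : ℂ) ^ 2) := by
  have h1 : evalC (Polynomial.aeval (normSqP d) p * B.YC k l) x =
      evalC (Polynomial.aeval (normSqP d) p) x * evalC (B.YC k l) x := by
    simp [evalC]
  have h2 : eval (fun i => (x i : ℂ)) (normSqP d) = (‖x‖ : ℂ) ^ 2 := by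
    rw [← Complex.ofReal_pow, EuclideanSpace.norm_sq_eq]
    simp [normSqP]
  have h3 : evalC (Polynomial.aeval (normSqP d) p) x = p.eval ((‖x‖ : ℂ) ^ 2) := by
    rw [evalC, ← h2, Polynomial.aeval_def, Polynomial.hom_eval₂]
    have : (eval (fun i => (x i : ℂ))).comp (algebraMap ℂ (MvPolynomial (Fin d) ℂ)) =
        RingHom.id ℂ := by
      ext c
      simp
    rw [this, Polynomial.eval₂_id]
  rw [h1, h3, B.evalC_YC, mul_comm, Complex.real_smul]

theorem statement6 {d : ℕ} (hd : 1 ≤ d) (B : HarmonicBasis d)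
    (T : MvPolynomial (Fin d) ℂ →ₗ[ℂ] ℂ) (hT : B.PPD T)
    (σ : (k : ℕ) → Fin (B.a k) → Measure ℝ)
    (hpos : ∀ k l, (σ k l) (Set.Iio 0) = 0)
    (hrep : ∀ (f : MvPolynomial (Fin d) ℂ) (K : ℕ) (p : (k : ℕ) → Fin (B.a k) → Polynomial ℂ),
      B.GaussDecomp f K p →
      T f = ∑ k ∈ Finset.range (K + 1), ∑ l, ∫ r, (p k l).eval ((r : ℂ) ^ 2) ∂(σ k l))
    (hsum : B.SummCond σ) :
    ∃ μ : SignedMeasure (E d), B.PseudoPositive μ ∧ IsMomentMeasure μ ∧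
      ∀ f : MvPolynomial (Fin d) ℂ, T f = sInt μ (evalC f) := by
  have p1 : |(1 : ℝ)| ≤ 1 := by simp
  have p2 : |(-1 : ℝ)| ≤ 1 := by simp
  have f1 := B.MM_finite hpos hsum p1
  have f2 := B.MM_finite hpos hsum p2
  have hmeas : ∀ f : MvPolynomial (Fin d) ℂ, StronglyMeasurable (evalC f) := fun f =>
    (continuous_evalC f).stronglyMeasurable
  have i1 : ∀ f : MvPolynomial (Fin d) ℂ, Integrable (evalC f) (B.MM σ 1) := fun f =>
    B.integrable_MM hpos hsum p1 (hmeas f) (PB_evalC f)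
  have i2 : ∀ f : MvPolynomial (Fin d) ℂ, Integrable (evalC f) (B.MM σ (-1)) := fun f =>
    B.integrable_MM hpos hsum p2 (hmeas f) (PB_evalC f)
  refine ⟨(B.MM σ 1).toSignedMeasure - (B.MM σ (-1)).toSignedMeasure, ?_, ?_, ?_⟩
  · intro k l h hc hcs hn
    have hcont : Continuous (fun x : E d => h ‖x‖ * B.Yf k l x) :=
      (hc.comp continuous_norm).mul (B.continuous_Yf k l)
    have hpb : PB (fun x : E d => h ‖x‖ * B.Yf k l x) := by
      obtain ⟨C, hC⟩ := hcs.exists_bound_of_continuous hc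
      have hh : PB (fun x : E d => h ‖x‖) :=
        ⟨C, 0, (norm_nonneg _).trans (hC 0), fun x => by simpa using hC ‖x‖⟩
      exact hh.smul (B.PB_Yf k l)
    have j1 := B.integrable_MM hpos hsum p1 hcont.stronglyMeasurable hpb
    have j2 := B.integrable_MM hpos hsum p2 hcont.stronglyMeasurable hpb
    rw [sInt_sub _ _ j1 j2, B.MM_comp hpos hsum hcont.stronglyMeasurable j1 j2 k l h
      (fun x => by rw [smul_eq_mul, mul_comm])]
    exact integral_nonneg hn
  · intro P
    exact integrable_totalVariation_sub _ _ (i1 P) (i2 P)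
  · intro f
    obtain ⟨K, p, hp⟩ := B.exists_gauss hd f
    rw [hrep f K p hp, sInt_sub _ _ (i1 f) (i2 f)]
    have hf : evalC f = fun x => ∑ k ∈ Finset.range (K + 1), ∑ l,
        evalC (Polynomial.aeval (normSqP d) (p k l) * B.YC k l) x := by
      ext x
      conv_lhs => rw [hp.2]
      simp only [evalC, map_sum]
    have hs : ∀ s : ℝ, (∀ f : MvPolynomial (Fin d) ℂ, Integrable (evalC f) (B.MM σ s)) →
        ∫ x, evalC f x ∂(B.MM σ s) = ∑ k ∈ Finset.range (K + 1), ∑ l,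
          ∫ x, evalC (Polynomial.aeval (normSqP d) (p k l) * B.YC k l) x ∂(B.MM σ s) := by
      intro s hi
      rw [hf, integral_finsetSum _ (fun k _ => integrable_finsetSum _ fun l _ => hi _)]
      refine Finset.sum_congr rfl fun k _ => ?_
      rw [integral_finsetSum _ (fun l _ => hi _)]
    rw [hs 1 i1, hs (-1) i2, ← Finset.sum_sub_distrib]
    refine Finset.sum_congr rfl fun k _ => ?_
    rw [← Finset.sum_sub_distrib]
    refine Finset.sum_congr rfl fun l _ => ?_
    exact (B.MM_comp hpos hsum (hmeas _) (i1 _) (i2 _) k l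
      (fun r => (p k l).eval ((r : ℂ) ^ 2)) (fun x => evalC_comp B k l (p k l) x)).symm
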